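/- arXiv:2510.19961 — 8 statements merged into one kernel-verified Lean document; each statement's English description precedes it below -/
import Mathlib

section
/- Let (Q,·,e) be a loop satisfying the automorphic inverse property (AIP): (x·y)^r = x^r·y^r for all x,y ∈ Q. Then the middle nucleus Nuc_m(Q) is contained in the commutant C(Q), and the three pairwise intersections Nuc_ℓ(Q)∩Nuc_m(Q), Nuc_ℓ(Q)∩Nuc_r(Q), Nuc_r(Q)∩Nuc_m(Q) all equal the center Z(Q) = C(Q) ∩ Nuc_ℓ(Q) ∩ Nuc_m(Q) ∩ Nuc_r(Q). -/
/-- A loop `(Q, ·, e)`: a quasigroup with two-sided identity, presented with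
explicit left division `ldiv a b = a \ b` and right division `rdiv b a = b / a`. -/
structure LoopStr (Q : Type*) where
  mul : Q → Q → Q
  e : Q
  ldiv : Q → Q → Q
  rdiv : Q → Q → Q
  one_mul : ∀ x, mul e x = x
  mul_one : ∀ x, mul x e = x
  mul_ldiv : ∀ a b, mul a (ldiv a b) = b
  ldiv_mul : ∀ a b, ldiv a (mul a b) = b
  rdiv_mul : ∀ a b, mul (rdiv b a) a = b
  mul_rdiv : ∀ a b, rdiv (mul b a) a = b

namespace LoopStr

variable {Q : Type*} (S : LoopStr Q)

/-- The left inverse `x^ℓ = e / x`. -/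
def linv (x : Q) : Q := S.rdiv S.e x

/-- The right inverse `x^r = x \ e`. -/
def rinv (x : Q) : Q := S.ldiv x S.e

/-- The left nucleus. -/
def lnuc : Set Q := {a | ∀ x y, S.mul (S.mul a x) y = S.mul a (S.mul x y)}

/-- The middle nucleus. -/
def mnuc : Set Q := {a | ∀ x y, S.mul (S.mul x a) y = S.mul x (S.mul a y)}

/-- The right nucleus. -/
def rnuc : Set Q := {a | ∀ x y, S.mul (S.mul x y) a = S.mul x (S.mul y a)}

/-- The commutant `C(Q)`. -/
def commutant : Set Q := {a | ∀ x, S.mul a x = S.mul x a}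

/-- The center `Z(Q) = C(Q) ∩ Nuc_ℓ ∩ Nuc_m ∩ Nuc_r`. -/
def center : Set Q := S.commutant ∩ S.lnuc ∩ S.mnuc ∩ S.rnuc

/-- The left translation `L_a` as a map. -/
def leftMul (a : Q) : Q → Q := fun x => S.mul a x

/-- The left translation `L_a` as a permutation of `Q`. -/
def leftPerm (a : Q) : Equiv.Perm Q :=
  ⟨fun x => S.mul a x, fun x => S.ldiv a x, S.ldiv_mul a, S.mul_ldiv a⟩

/-- The right translation `R_a` as a permutation of `Q`. -/
def rightPerm (a : Q) : Equiv.Perm Q :=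
  ⟨fun x => S.mul x a, fun x => S.rdiv x a, fun x => S.mul_rdiv a x, fun x => S.rdiv_mul a x⟩

/-- The multiplication group `Mlt(Q) = ⟨L_x, R_x : x ∈ Q⟩ ≤ Sym(Q)`. -/
def Mlt : Subgroup (Equiv.Perm Q) :=
  Subgroup.closure (Set.range S.leftPerm ∪ Set.range S.rightPerm)

/-- `x^n = L_x^n(e)` for natural `n`. -/
def npow (a : Q) (n : ℕ) : Q := (S.leftPerm a ^ n) S.e

/-- `x^n = L_x^n(e)` for integer `n`. -/
def zpow (a : Q) (n : ℤ) : Q := (S.leftPerm a ^ n) S.e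

/-- The order of an element: the least `n > 0` with `x^n = e` (or `0` if none exists). -/
noncomputable def lorder (a : Q) : ℕ := sInf {n : ℕ | 0 < n ∧ S.npow a n = S.e}

/-- A subloop: contains `e`, closed under multiplication and both divisions. -/
def IsSubloop (N : Set Q) : Prop :=
  S.e ∈ N ∧ (∀ a ∈ N, ∀ b ∈ N, S.mul a b ∈ N) ∧
    (∀ a ∈ N, ∀ b ∈ N, S.ldiv a b ∈ N) ∧ (∀ a ∈ N, ∀ b ∈ N, S.rdiv a b ∈ N)

/-- A normal subloop: a subloop with `xN = Nx`, `(xN)y = x(Ny)`, `N(xy) = (Nx)y`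
elementwise as sets. -/
def IsNormalSubloop (N : Set Q) : Prop :=
  S.IsSubloop N ∧
  (∀ x : Q, (fun a => S.mul x a) '' N = (fun a => S.mul a x) '' N) ∧
  (∀ x y : Q, (fun a => S.mul (S.mul x a) y) '' N = (fun a => S.mul x (S.mul a y)) '' N) ∧
  (∀ x y : Q, (fun a => S.mul a (S.mul x y)) '' N = (fun a => S.mul (S.mul a x) y) '' N)

/-- A loop is simple if its only normal subloops are `{e}` and `Q`. -/
def IsSimple : Prop :=
  ∀ N : Set Q, S.IsNormalSubloop N → N = {S.e} ∨ N = Set.univ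

lemma mul_rinv (x : Q) : S.mul x (S.rinv x) = S.e := S.mul_ldiv x S.e

lemma linv_mul (x : Q) : S.mul (S.linv x) x = S.e := S.rdiv_mul x S.e

lemma linv_rinv (x : Q) : S.linv (S.rinv x) = x := by
  have h := S.mul_rdiv (S.rinv x) x
  rw [S.mul_rinv] at h
  exact h

lemma rinv_linv (x : Q) : S.rinv (S.linv x) = x := by
  have h := S.ldiv_mul (S.linv x) x
  rw [S.linv_mul] at h
  exact h

lemma rinv_e : S.rinv S.e = S.e := by
  have h := S.ldiv_mul S.e S.e
  rw [S.one_mul] at h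
  exact h

lemma rdiv_e (x : Q) : S.rdiv x S.e = x := by
  have h := S.mul_rdiv S.e x
  rw [S.mul_one] at h
  exact h

/-- The principal right isostrophe `(Q, ∘)` of `(Q, ·)`, with `x ∘ y = x / (y^r)`,
right division `x // y = x·(y^r)` and left division `x \\ y = (y \ x)^ℓ`. -/
def iso : LoopStr Q where
  mul x y := S.rdiv x (S.rinv y)
  e := S.e
  ldiv x y := S.linv (S.ldiv y x)
  rdiv x y := S.mul x (S.rinv y)
  one_mul x := S.linv_rinv x
  mul_one x := by
    show S.rdiv x (S.rinv S.e) = x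
    rw [S.rinv_e, S.rdiv_e]
  mul_ldiv a b := by
    show S.rdiv a (S.rinv (S.linv (S.ldiv b a))) = b
    rw [S.rinv_linv]
    have h := S.mul_rdiv (S.ldiv b a) b
    rw [S.mul_ldiv] at h
    exact h
  ldiv_mul a b := by
    show S.linv (S.ldiv (S.rdiv a (S.rinv b)) a) = b
    have h := S.ldiv_mul (S.rdiv a (S.rinv b)) (S.rinv b)
    rw [S.rdiv_mul] at h
    rw [h, S.linv_rinv]
  rdiv_mul a b := by
    show S.rdiv (S.mul b (S.rinv a)) (S.rinv a) = b
    exact S.mul_rdiv (S.rinv a) b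
  mul_rdiv a b := by
    show S.mul (S.rdiv b (S.rinv a)) (S.rinv a) = b
    exact S.rdiv_mul (S.rinv a) b

end LoopStr

namespace LoopStr

variable {Q : Type*} (S : LoopStr Q)

lemma mul_left_cancel {a x y : Q} (h : S.mul a x = S.mul a y) : x = y := by
  rw [← S.ldiv_mul a x, h, S.ldiv_mul]

lemma rinv_surjective : Function.Surjective S.rinv := fun x => ⟨S.linv x, S.rinv_linv x⟩

variable {S}

/-- In an AIP loop the middle nucleus is contained in the commutant. -/
lemma mnuc_subset_commutant
    (hAIP : ∀ x y : Q, S.rinv (S.mul x y) = S.mul (S.rinv x) (S.rinv y)) :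
    S.mnuc ⊆ S.commutant := by
  intro a ha
  have ha : ∀ x y, S.mul (S.mul x a) y = S.mul x (S.mul a y) := ha
  have key : ∀ z, S.mul a (S.mul z (S.rinv a)) = z := by
    intro z
    obtain ⟨x, rfl⟩ := S.rinv_surjective z
    apply S.mul_left_cancel (a := x)
    rw [← hAIP, ← ha, S.mul_rinv, S.mul_rinv]
  intro w
  have h := key (S.mul w a)
  rwa [ha, S.mul_rinv, S.mul_one] at h

/-- In an AIP loop an element of both the left and the right nucleus lies in the commutant. -/
lemma lnuc_inter_rnuc_subset_commutant
    (hAIP : ∀ x y : Q, S.rinv (S.mul x y) = S.mul (S.rinv x) (S.rinv y)) :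
    S.lnuc ∩ S.rnuc ⊆ S.commutant := by
  rintro a ⟨hl, hr⟩
  have hl : ∀ x y, S.mul (S.mul a x) y = S.mul a (S.mul x y) := hl
  have hr : ∀ x y, S.mul (S.mul x y) a = S.mul x (S.mul y a) := hr
  have hinv : ∀ w, S.mul a (S.mul (S.rinv a) w) = w := by
    intro w
    rw [← hl, S.mul_rinv, S.one_mul]
  have hba : S.mul (S.rinv a) a = S.e := by
    apply S.mul_left_cancel (a := a)
    rw [hinv, S.mul_one]
  have hx : ∀ x, S.mul x (S.mul (S.rinv a) (S.rinv x)) = S.rinv a := by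
    intro x
    apply S.mul_left_cancel (a := a)
    rw [← hAIP, ← hl, S.mul_rinv, S.mul_rinv]
  intro z
  obtain ⟨x, rfl⟩ := S.rinv_surjective z
  have h : S.mul (S.rinv a) (S.mul (S.rinv x) a) = S.rinv x := by
    apply S.mul_left_cancel (a := x)
    rw [← hr, ← hr, hx, hba, S.mul_rinv]
  rw [← hinv (S.mul (S.rinv x) a), h]

end LoopStr

/-- In an AIP loop, the middle nucleus is contained in the commutant,
and all pairwise intersections of nuclei equal the center. -/
theorem aip_nuclei_center {Q : Type*} (S : LoopStr Q)
    (hAIP : ∀ x y : Q, S.rinv (S.mul x y) = S.mul (S.rinv x) (S.rinv y)) :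
    S.mnuc ⊆ S.commutant ∧
    S.lnuc ∩ S.mnuc = S.center ∧
    S.lnuc ∩ S.rnuc = S.center ∧
    S.rnuc ∩ S.mnuc = S.center := by
  have hc := LoopStr.mnuc_subset_commutant hAIP
  refine ⟨hc, ?_, ?_, ?_⟩
  · ext a
    refine ⟨fun ⟨hl, hm⟩ => ⟨⟨⟨hc hm, hl⟩, hm⟩, fun x y => ?_⟩, fun h => ⟨h.1.1.2, h.1.2⟩⟩
    rw [← hc hm (S.mul x y), ← hl, hc hm x, hm, hc hm y]
  · ext a
    refine ⟨fun ⟨hl, hr⟩ => ?_, fun h => ⟨h.1.1.2, h.2⟩⟩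
    have ha := LoopStr.lnuc_inter_rnuc_subset_commutant hAIP ⟨hl, hr⟩
    refine ⟨⟨⟨ha, hl⟩, fun x y => ?_⟩, hr⟩
    rw [← ha x, hl, ha (S.mul x y), hr, ha y]
  · ext a
    refine ⟨fun ⟨hr, hm⟩ => ⟨⟨⟨hc hm, fun x y => ?_⟩, hm⟩, hr⟩, fun h => ⟨h.2, h.1.2⟩⟩
    rw [hc hm x, hm, hc hm y, ← hr, hc hm (S.mul x y)]
end

section
/- Let (Q,·,e) be a loop with principal right isostrophe (Q,∘), where x∘y = x/(y^r). For bijections α,β,γ : Q → Q, the triple (α,β,γ) is an autotopism of (Q,∘) if and only if (γ, ρ∘β∘λ, α) is an autotopism of (Q,·), where λ(x) = x^ℓ and ρ(x) = x^r. -/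
/-- For bijections `α β γ : Q → Q`, `(α,β,γ)` is an autotopism of the
principal right isostrophe `(Q,∘)` iff `(γ, ρ∘β∘λ, α)` is an autotopism of `(Q,·)`. -/
theorem iso_autotopism_iff {Q : Type*} (S : LoopStr Q) (α β γ : Q → Q)
    (hα : Function.Bijective α) (hβ : Function.Bijective β) (hγ : Function.Bijective γ) :
    (∀ x y : Q, S.iso.mul (α x) (β y) = γ (S.iso.mul x y)) ↔
    (∀ x y : Q, S.mul (γ x) ((S.rinv ∘ β ∘ S.linv) y) = α (S.mul x y)) := by
  constructor
  · intro h x y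
    have h' : S.rdiv (α (S.mul x y)) (S.rinv (β (S.linv y))) =
        γ (S.rdiv (S.mul x y) (S.rinv (S.linv y))) := h (S.mul x y) (S.linv y)
    rw [S.rinv_linv, S.mul_rdiv] at h'
    rw [← h']
    exact S.rdiv_mul _ _
  · intro h x y
    have h' : S.mul (γ (S.rdiv x (S.rinv y))) (S.rinv (β (S.linv (S.rinv y)))) =
        α (S.mul (S.rdiv x (S.rinv y)) (S.rinv y)) := h (S.rdiv x (S.rinv y)) (S.rinv y)
    rw [S.linv_rinv, S.rdiv_mul] at h'
    rw [← h']
    exact S.mul_rdiv _ _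
end

section
/- Let (Q,·,e) be a loop with principal right isostrophe (Q,∘), where x∘y = x/(y^r). Then: (1) (Q,·) has left nuclear squares if and only if (Q,∘) has left nuclear squares; (2) (Q,·) has left and middle nuclear squares if and only if (Q,∘) has left and right nuclear squares. -/
namespace LoopStr

variable {Q : Type*} (S : LoopStr Q)

lemma mul_right_cancel {a x y : Q} (h : S.mul x a = S.mul y a) : x = y := by
  rw [← S.mul_rdiv a x, h, S.mul_rdiv]

lemma iso_mul_eq_iff {x y z : Q} : S.iso.mul x y = z ↔ S.mul z (S.rinv y) = x :=
  ⟨fun h => h ▸ S.rdiv_mul _ _, fun h => h ▸ S.mul_rdiv _ _⟩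

lemma iso_mul_mul_rinv (x y : Q) : S.mul (S.iso.mul x y) (S.rinv y) = x :=
  S.iso_mul_eq_iff.mp rfl

lemma ldiv_e (x : Q) : S.ldiv S.e x = x := by
  simpa only [S.one_mul] using S.ldiv_mul S.e x

lemma iso_rinv (x : Q) : S.iso.rinv x = S.linv x := by
  change S.linv (S.ldiv S.e x) = S.linv x
  rw [S.ldiv_e]

lemma iso_iso_mul (x y : Q) : S.iso.iso.mul x y = S.mul x y := by
  change S.mul x (S.rinv (S.iso.rinv y)) = S.mul x y
  rw [iso_rinv, rinv_linv]

lemma iso_iso_lnuc : S.iso.iso.lnuc = S.lnuc := by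
  simp only [lnuc, iso_iso_mul]

lemma iso_mul_of_mem_lnuc {a : Q} (ha : a ∈ S.lnuc) (x : Q) : S.iso.mul a x = S.mul a x := by
  rw [iso_mul_eq_iff, ha, mul_rinv, mul_one]

lemma lnuc_subset_iso_lnuc : S.lnuc ⊆ S.iso.lnuc := by
  intro a ha x y
  rw [S.iso_mul_of_mem_lnuc ha, S.iso_mul_of_mem_lnuc ha, iso_mul_eq_iff, ha, iso_mul_mul_rinv]

lemma iso_lnuc : S.iso.lnuc = S.lnuc :=
  (S.iso.lnuc_subset_iso_lnuc.trans S.iso_iso_lnuc.subset).antisymm S.lnuc_subset_iso_lnuc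

lemma mul_eq_e_symm_of_mem_lnuc {a b : Q} (ha : a ∈ S.lnuc) (h : S.mul a b = S.e) :
    S.mul b a = S.e := by
  apply S.mul_left_cancel (a := a)
  rw [← ha, h, one_mul, mul_one]

lemma mul_eq_e_symm_of_mem_rnuc {a b : Q} (ha : a ∈ S.rnuc) (h : S.mul a b = S.e) :
    S.mul b a = S.e := by
  apply S.mul_left_cancel (a := a)
  rw [← ha, h, one_mul, mul_one]

lemma mem_lnuc_of_mul_eq_e {a b : Q} (ha : a ∈ S.lnuc) (h : S.mul a b = S.e) : b ∈ S.lnuc := by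
  have hab (y : Q) : S.mul a (S.mul b y) = y := by rw [← ha, h, one_mul]
  intro x y
  apply S.mul_left_cancel (a := a)
  rw [hab, ← ha, hab]

lemma mem_rnuc_of_mul_eq_e {a b : Q} (ha : a ∈ S.rnuc) (h : S.mul a b = S.e) : b ∈ S.rnuc := by
  have hab (y : Q) : S.mul (S.mul y b) a = y := by
    rw [ha, S.mul_eq_e_symm_of_mem_rnuc ha h, mul_one]
  intro x y
  apply S.mul_right_cancel (a := a)
  rw [hab, ha, hab]

lemma mem_mnuc_of_mul_eq_e {a b : Q} (ha : a ∈ S.mnuc) (h : S.mul a b = S.e) : b ∈ S.mnuc := by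
  have hab (z : Q) : S.mul (S.mul z a) b = z := by rw [ha, h, mul_one]
  have hba : S.mul b a = S.e := by
    have hb := hab (S.linv a)
    rw [linv_mul, one_mul] at hb
    rw [hb, linv_mul]
  have hay (y : Q) : S.mul a (S.mul b y) = y := by
    apply S.mul_left_cancel (a := b)
    rw [← ha, hba, one_mul]
  intro x y
  obtain ⟨z, rfl⟩ : ∃ z, S.mul z a = x := ⟨S.rdiv x a, S.rdiv_mul a x⟩
  rw [hab, ha, hay]

/-- The right nucleus of the isostrophe is the middle nucleus of the loop. -/
lemma iso_rnuc : S.iso.rnuc = S.mnuc := by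
  ext a
  constructor
  · intro ha
    have hr (z w : Q) :
        S.mul (S.iso.mul z a) (S.rinv (S.iso.mul (S.linv w) a)) = S.mul z w := by
      rw [← iso_mul_eq_iff, ← ha]
      congr 1
      rw [iso_mul_eq_iff, rinv_linv]
    have hmul (z : Q) : S.iso.mul z a = S.mul z a := by
      have h := hr z a
      have hl : S.iso.mul (S.linv a) a = S.e := by
        rw [← iso_rinv]
        exact S.iso.mul_eq_e_symm_of_mem_rnuc ha (S.iso.mul_rinv a)
      rwa [hl, rinv_e, mul_one] at h
    have hG (w : Q) : S.mul a (S.rinv (S.iso.mul (S.linv w) a)) = w := by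
      have h := hr S.e w
      rwa [hmul, one_mul, one_mul] at h
    intro x y
    have h := hr x (S.mul a y)
    rw [hmul] at h
    rwa [S.mul_left_cancel (hG (S.mul a y))] at h
  · intro ha x y
    have hmul (z : Q) : S.iso.mul z a = S.mul z a := by
      rw [iso_mul_eq_iff, ha, mul_rinv, mul_one]
    rw [hmul, hmul, eq_comm, iso_mul_eq_iff, ha]
    have : S.mul a (S.rinv (S.mul y a)) = S.rinv y := by
      apply S.mul_left_cancel (a := y)
      rw [← ha, mul_rinv, mul_rinv]
    rw [this, iso_mul_mul_rinv]

lemma iso_mul_self (hS : ∀ x, S.mul x x ∈ S.lnuc) (x : Q) :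
    S.iso.mul x x = S.rinv (S.mul (S.rinv x) (S.rinv x)) := by
  have hn := S.mul_rinv (S.mul (S.rinv x) (S.rinv x))
  rw [iso_mul_eq_iff]
  apply S.mul_right_cancel (a := S.rinv x)
  rw [S.mem_lnuc_of_mul_eq_e (hS _) hn, S.mul_eq_e_symm_of_mem_lnuc (hS _) hn, mul_rinv]

lemma iso_mul_self_mem_lnuc (hS : ∀ x, S.mul x x ∈ S.lnuc) (x : Q) :
    S.iso.mul x x ∈ S.iso.lnuc := by
  rw [S.iso_mul_self hS, iso_lnuc]
  exact S.mem_lnuc_of_mul_eq_e (hS _) (S.mul_rinv _)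

end LoopStr

/-- `(Q,·)` has left nuclear squares iff its principal right isostrophe
`(Q,∘)` has left nuclear squares; and `(Q,·)` has left and middle nuclear squares iff
`(Q,∘)` has left and right nuclear squares. -/
theorem iso_nuclear_squares {Q : Type*} (S : LoopStr Q) :
    ((∀ x : Q, S.mul x x ∈ S.lnuc) ↔ (∀ x : Q, S.iso.mul x x ∈ S.iso.lnuc)) ∧
    ((∀ x : Q, S.mul x x ∈ S.lnuc ∩ S.mnuc) ↔
      (∀ x : Q, S.iso.mul x x ∈ S.iso.lnuc ∩ S.iso.rnuc)) := by
  have hl : (∀ x : Q, S.mul x x ∈ S.lnuc) ↔ (∀ x : Q, S.iso.mul x x ∈ S.iso.lnuc) := by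
    refine ⟨S.iso_mul_self_mem_lnuc, fun h x => ?_⟩
    simpa only [LoopStr.iso_iso_mul, LoopStr.iso_iso_lnuc] using S.iso.iso_mul_self_mem_lnuc h x
  refine ⟨hl, fun h x => ?_, fun h x => ?_⟩
  · have hS (y : Q) : S.mul y y ∈ S.lnuc := (h y).1
    refine ⟨hl.mp hS x, ?_⟩
    rw [S.iso_mul_self hS, S.iso_rnuc]
    exact S.mem_mnuc_of_mul_eq_e (h _).2 (S.mul_rinv _)
  · have hS (y : Q) : S.iso.mul y y ∈ S.iso.lnuc := (h y).1
    refine ⟨hl.mpr hS x, ?_⟩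
    rw [← S.iso_iso_mul, S.iso.iso_mul_self hS, ← S.iso_rnuc]
    exact S.iso.mem_rnuc_of_mul_eq_e (h _).2 (S.iso.mul_rinv _)
end

section
/- Let (Q,·,e) be a loop with left and middle nuclear squares. Then for all x ∈ Q: (1) x^ℓ·(x·x) = x^{ℓℓ} and L_{x^ℓ} ∘ L_{x·x} = L_{x^{ℓℓ}}; (2) L_{x^ℓ} ∘ L_x = L_x ∘ L_{x^r}; (3) L_x ∘ L_{x^r}^{-1} = L_{x·x^{rr}} and x·x^{rr} ∈ Nuc_ℓ(Q) ∩ Nuc_m(Q). (Here x^{ℓℓ} = (x^ℓ)^ℓ and x^{rr} = (x^r)^r.) -/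
namespace LoopStr

variable {Q : Type*} (S : LoopStr Q)

lemma mul_left_cancel_s6 {a b c : Q} (hbc : S.mul a b = S.mul a c) : b = c := by
  rw [← S.ldiv_mul a b, hbc, S.ldiv_mul]

lemma mul_right_cancel_s6 {a b c : Q} (hbc : S.mul b a = S.mul c a) : b = c := by
  rw [← S.mul_rdiv a b, hbc, S.mul_rdiv]

lemma ldiv_e_mul {n : Q} (hn : n ∈ S.lnuc) (z : Q) :
    S.mul (S.ldiv n S.e) z = S.ldiv n z := by
  apply S.mul_left_cancel_s6 (a := n)
  rw [← hn, S.mul_ldiv, S.mul_ldiv, S.one_mul]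

lemma ldiv_e_mem_lnuc {n : Q} (hn : n ∈ S.lnuc) : S.ldiv n S.e ∈ S.lnuc := by
  intro u v
  rw [S.ldiv_e_mul hn, S.ldiv_e_mul hn]
  apply S.mul_left_cancel_s6 (a := n)
  rw [← hn, S.mul_ldiv, S.mul_ldiv]

lemma ldiv_e_mem_mnuc {n : Q} (hl : n ∈ S.lnuc) (hm : n ∈ S.mnuc) :
    S.ldiv n S.e ∈ S.mnuc := by
  intro u v
  obtain ⟨t, rfl⟩ : ∃ t, S.mul t n = u := ⟨S.rdiv u n, S.rdiv_mul n u⟩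
  rw [hm, hm, S.mul_ldiv, S.mul_one, S.ldiv_e_mul hl, S.mul_ldiv]

lemma sq_mul_linv (h : ∀ x : Q, S.mul x x ∈ S.lnuc ∩ S.mnuc) (x : Q) :
    S.mul (S.mul x x) (S.linv x) = x := by
  apply S.mul_right_cancel_s6 (a := x)
  rw [(h x).1, S.linv_mul, S.mul_one]

lemma linv_mul_sq (h : ∀ x : Q, S.mul x x ∈ S.lnuc ∩ S.mnuc) (x : Q) :
    S.mul (S.linv x) (S.mul x x) = S.linv (S.linv x) := by
  apply S.mul_right_cancel_s6 (a := S.linv x)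
  rw [(h x).2, S.sq_mul_linv h, S.linv_mul, S.linv_mul]

lemma linv_mul_sq_mul (h : ∀ x : Q, S.mul x x ∈ S.lnuc ∩ S.mnuc) (x z : Q) :
    S.mul (S.linv x) (S.mul (S.mul x x) z) = S.mul (S.linv (S.linv x)) z := by
  rw [← (h x).2, S.linv_mul_sq h]

lemma sq_rinv_mul_mul (h : ∀ x : Q, S.mul x x ∈ S.lnuc ∩ S.mnuc) (x z : Q) :
    S.mul (S.mul (S.rinv x) (S.rinv x)) (S.mul x z) = S.mul (S.rinv x) z := by
  have hx := S.sq_mul_linv h (S.rinv x)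
  rw [S.linv_rinv] at hx
  rw [← (h _).1, hx]

lemma mul_ldiv_rinv (h : ∀ x : Q, S.mul x x ∈ S.lnuc ∩ S.mnuc) (x z : Q) :
    S.mul x (S.ldiv (S.rinv x) z) = S.ldiv (S.mul (S.rinv x) (S.rinv x)) z := by
  apply S.mul_left_cancel_s6 (a := S.mul (S.rinv x) (S.rinv x))
  rw [S.sq_rinv_mul_mul h, S.mul_ldiv, S.mul_ldiv]

end LoopStr

/-- In a loop with left and middle nuclear squares, for all `x`:
(1) `x^ℓ·(x·x) = x^{ℓℓ}` and `L_{x^ℓ} ∘ L_{x·x} = L_{x^{ℓℓ}}`;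
(2) `L_{x^ℓ} ∘ L_x = L_x ∘ L_{x^r}`;
(3) `L_x ∘ L_{x^r}⁻¹ = L_{x·x^{rr}}` and `x·x^{rr} ∈ Nuc_ℓ ∩ Nuc_m`.
(Here `L_{x^r}⁻¹` is the map `y ↦ x^r \ y`.) -/
theorem lm_nuclear_sq_ids {Q : Type*} (S : LoopStr Q)
    (h : ∀ x : Q, S.mul x x ∈ S.lnuc ∩ S.mnuc) :
    ∀ x : Q,
      (S.mul (S.linv x) (S.mul x x) = S.linv (S.linv x) ∧
        S.leftMul (S.linv x) ∘ S.leftMul (S.mul x x) = S.leftMul (S.linv (S.linv x))) ∧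
      (S.leftMul (S.linv x) ∘ S.leftMul x = S.leftMul x ∘ S.leftMul (S.rinv x)) ∧
      (S.leftMul x ∘ S.ldiv (S.rinv x) = S.leftMul (S.mul x (S.rinv (S.rinv x))) ∧
        S.mul x (S.rinv (S.rinv x)) ∈ S.lnuc ∩ S.mnuc) := by
  intro x
  refine ⟨⟨S.linv_mul_sq h x, ?_⟩, ?_, ?_, ?_⟩
  · funext z
    exact S.linv_mul_sq_mul h x z
  · funext z
    have h₁ := S.linv_mul_sq_mul h (S.rinv x) (S.mul x z)
    rw [S.linv_rinv] at h₁
    show S.mul (S.linv x) (S.mul x z) = S.mul x (S.mul (S.rinv x) z)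
    rw [← h₁, S.sq_rinv_mul_mul h]
  · funext z
    have h₂ := S.mul_ldiv_rinv h x
    show S.mul x (S.ldiv (S.rinv x) z) = S.mul (S.mul x (S.ldiv (S.rinv x) S.e)) z
    rw [h₂, h₂, S.ldiv_e_mul (h _).1]
  · show S.mul x (S.ldiv (S.rinv x) S.e) ∈ _
    rw [S.mul_ldiv_rinv h]
    exact ⟨S.ldiv_e_mem_lnuc (h _).1, S.ldiv_e_mem_mnuc (h _).1 (h _).2⟩
end

section
/- Let (Q,·,e) be a loop with left and middle nuclear squares. For all a ∈ Nuc_ℓ(Q) ∩ Nuc_m(Q) and all x ∈ Q, the element (x·a)·x = x·(a·x) (well-defined since a ∈ Nuc_m(Q)) again lies in Nuc_ℓ(Q) ∩ Nuc_m(Q). -/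
namespace LoopStr

variable {Q : Type*} (S : LoopStr Q)

lemma mem_lnuc_of_mul_mem {a u : Q} (ha : a ∈ S.lnuc) (hau : S.mul a u ∈ S.lnuc) :
    u ∈ S.lnuc := by
  intro x y
  apply S.mul_left_cancel (a := a)
  rw [← ha, ← ha, hau, ha]

lemma mem_mnuc_of_mul_mem {a u : Q} (hal : a ∈ S.lnuc) (ham : a ∈ S.mnuc)
    (hau : S.mul a u ∈ S.mnuc) : u ∈ S.mnuc := by
  intro x y
  obtain ⟨z, rfl⟩ : ∃ z, S.mul z a = x := ⟨S.rdiv x a, S.rdiv_mul a x⟩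
  rw [ham, hau, hal, ham]

end LoopStr

/-- In a loop with left and middle nuclear squares, if
`a ∈ Nuc_ℓ(Q) ∩ Nuc_m(Q)` then for every `x`, `(x·a)·x = x·(a·x)` lies in
`Nuc_ℓ(Q) ∩ Nuc_m(Q)`. -/
theorem xax_in_lmnuc {Q : Type*} (S : LoopStr Q)
    (h : ∀ x : Q, S.mul x x ∈ S.lnuc ∩ S.mnuc)
    (a : Q) (ha : a ∈ S.lnuc ∩ S.mnuc) (x : Q) :
    S.mul (S.mul x a) x = S.mul x (S.mul a x) ∧
    S.mul (S.mul x a) x ∈ S.lnuc ∩ S.mnuc := by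
  have hsq := h (S.mul a x)
  rw [ha.1] at hsq
  refine ⟨ha.2 x x, ?_⟩
  rw [ha.2]
  exact ⟨S.mem_lnuc_of_mul_mem ha.1 hsq.1, S.mem_mnuc_of_mul_mem ha.1 ha.2 hsq.2⟩
end

section
/- Let (Q,·,e) be a loop with central squares, i.e., x·x ∈ Z(Q) for all x ∈ Q. Then Q is power-associative: defining integer powers by x^n = L_x^n(e) for n ∈ ℤ (where L_x^{-1} is the inverse bijection of L_x), one has x^m · x^n = x^{m+n} for all x ∈ Q and all integers m, n. -/
namespace LoopStr

variable {Q : Type*} (S : LoopStr Q)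

lemma zpow_zero (x : Q) : S.zpow x 0 = S.e := rfl

lemma zpow_one (x : Q) : S.zpow x 1 = x := by
  simp [zpow, leftPerm, S.mul_one]

lemma mul_zpow (x : Q) (n : ℤ) : S.mul x (S.zpow x n) = S.zpow x (n + 1) := by
  rw [zpow, zpow, add_comm, zpow_one_add]
  rfl

lemma commute_leftPerm {c : Q} (hc : c ∈ S.center) (a : Q) :
    Commute (S.leftPerm a) (S.leftPerm c) := by
  obtain ⟨⟨⟨hcomm, hl⟩, hm⟩, -⟩ := hc
  ext y
  change S.mul a (S.mul c y) = S.mul c (S.mul a y)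
  rw [← hm, ← hcomm, hl]

lemma commute_rightPerm {c : Q} (hc : c ∈ S.center) (b : Q) :
    Commute (S.rightPerm b) (S.leftPerm c) := by
  ext y
  exact hc.1.1.2 y b

lemma leftPerm_zpow_mul {c : Q} (hc : c ∈ S.center) (k : ℤ) (a b : Q) :
    S.mul ((S.leftPerm c ^ k) a) b = (S.leftPerm c ^ k) (S.mul a b) :=
  congrArg (fun f : Equiv.Perm Q => f a) ((S.commute_rightPerm hc b).zpow_right k).eq

/-- If `x·x` is central, then `x ^ (2k + i)` is `x ^ i` translated `k` times by `x·x`. -/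
lemma zpow_two_mul_add {x : Q} (hc : S.mul x x ∈ S.center) (k i : ℤ) :
    S.zpow x (2 * k + i) = (S.leftPerm (S.mul x x) ^ k) (S.zpow x i) := by
  have hcomm := S.commute_leftPerm hc x
  have hfix : ((S.leftPerm (S.mul x x))⁻¹ * S.leftPerm x ^ (2 : ℤ)) S.e = S.e := by
    rw [Equiv.Perm.mul_apply, Equiv.Perm.inv_eq_iff_eq, zpow_two]
    change S.mul x (S.mul x S.e) = S.mul (S.mul x x) S.e
    rw [S.mul_one, S.mul_one]
  have hpow := Equiv.Perm.zpow_apply_eq_self_of_apply_eq_self hfix k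
  rw [((hcomm.zpow_left 2).symm.inv_left).mul_zpow, inv_zpow, ← zpow_mul,
    Equiv.Perm.mul_apply, Equiv.Perm.inv_eq_iff_eq] at hpow
  rw [zpow, zpow, add_comm, _root_.zpow_add, Equiv.Perm.mul_apply, hpow, ← Equiv.Perm.mul_apply,
    (hcomm.zpow_zpow i k).eq, Equiv.Perm.mul_apply]

end LoopStr

/-- A loop with central squares is power-associative:
with `x^n = L_x^n(e)` for `n ∈ ℤ`, one has `x^m · x^n = x^{m+n}`. -/
theorem central_squares_power_associative {Q : Type*} (S : LoopStr Q)
    (h : ∀ x : Q, S.mul x x ∈ S.center) :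
    ∀ (x : Q) (m n : ℤ), S.mul (S.zpow x m) (S.zpow x n) = S.zpow x (m + n) := by
  intro x m n
  have hc := h x
  obtain ⟨k, i, rfl, hi⟩ : ∃ k i : ℤ, m = 2 * k + i ∧ (i = 0 ∨ i = 1) :=
    ⟨m / 2, m % 2, by omega, by omega⟩
  have base : S.mul (S.zpow x i) (S.zpow x n) = S.zpow x (i + n) := by
    rcases hi with rfl | rfl
    · rw [S.zpow_zero, S.one_mul, zero_add]
    · rw [S.zpow_one, S.mul_zpow, add_comm]
  rw [add_assoc, S.zpow_two_mul_add hc, S.zpow_two_mul_add hc, S.leftPerm_zpow_mul hc, base]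
end

section
/- Let (Q,·,e) be a loop with central squares, i.e., x·x ∈ Z(Q) for all x ∈ Q. Then Q has the automorphic inverse property ((x·y)^r = x^r·y^r for all x,y) if and only if the squaring map s : Q → Q, s(x) = x·x, is an endomorphism of (Q,·) (i.e., (x·y)·(x·y) = (x·x)·(y·y) for all x,y). -/
namespace LoopStr

variable {Q : Type*} (S : LoopStr Q)

/-- Central factors can be collected on the left of a product. -/
lemma mul_mul_mul_comm_of_mem_center {a b : Q} (ha : a ∈ S.center) (hb : b ∈ S.center)
    (u v : Q) : S.mul (S.mul a u) (S.mul b v) = S.mul (S.mul a b) (S.mul u v) := by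
  obtain ⟨⟨⟨-, haℓ⟩, -⟩, -⟩ := ha
  obtain ⟨⟨⟨hbc, hbℓ⟩, hbm⟩, -⟩ := hb
  rw [haℓ u, ← hbm u v, ← hbc u, hbℓ u v, ← haℓ b]

/-- If the square of `x` is central, then `x² · x^r = x`. -/
lemma sq_mul_rinv {x : Q} (hx : S.mul x x ∈ S.center) :
    S.mul (S.mul x x) (S.rinv x) = x := by
  obtain ⟨⟨⟨hc, hℓ⟩, hm⟩, -⟩ := hx
  apply S.mul_left_cancel (a := x)
  rw [← hm x, ← hc x, hℓ x, S.mul_rinv, S.mul_one]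

end LoopStr

/-- A loop with central squares has the automorphic inverse property
iff the squaring map `x ↦ x·x` is an endomorphism. -/
theorem central_squares_aip_iff_sq_endo {Q : Type*} (S : LoopStr Q)
    (h : ∀ x : Q, S.mul x x ∈ S.center) :
    (∀ x y : Q, S.rinv (S.mul x y) = S.mul (S.rinv x) (S.rinv y)) ↔
    (∀ x y : Q, S.mul (S.mul x y) (S.mul x y) = S.mul (S.mul x x) (S.mul y y)) := by
  have key (x y : Q) : S.mul (S.mul (S.mul x y) (S.mul x y)) (S.rinv (S.mul x y)) =
      S.mul (S.mul (S.mul x x) (S.mul y y)) (S.mul (S.rinv x) (S.rinv y)) := by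
    rw [S.sq_mul_rinv (h _), ← S.mul_mul_mul_comm_of_mem_center (h x) (h y),
      S.sq_mul_rinv (h x), S.sq_mul_rinv (h y)]
  constructor <;> intro H x y <;> have hxy := key x y <;> rw [H x y] at hxy
  · exact S.mul_right_cancel hxy
  · exact S.mul_left_cancel hxy
end

section
/- Let (Q,·,e) be a loop whose squares lie in two of the three nuclei: there are two distinct indices i,j ∈ {ℓ,m,r} with x·x ∈ Nuc_i(Q) ∩ Nuc_j(Q) for all x ∈ Q. Then the following are equivalent: (1) Q has the automorphic inverse property ((x·y)^r = x^r·y^r for all x,y); (2) the squaring map s : Q → Q, s(x) = x·x, is an endomorphism of (Q,·). Moreover, when these equivalent conditions hold, Q has central squares: x·x ∈ Z(Q) for all x ∈ Q. -/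
namespace LoopStr

variable {Q : Type*} (S : LoopStr Q)

/-- The automorphic inverse property. -/
def AIP : Prop := ∀ x y : Q, S.rinv (S.mul x y) = S.mul (S.rinv x) (S.rinv y)

/-- The squaring map is an endomorphism. -/
def SqEndo : Prop :=
  ∀ x y : Q, S.mul (S.mul x y) (S.mul x y) = S.mul (S.mul x x) (S.mul y y)

/-- The opposite loop. -/
def op : LoopStr Q where
  mul x y := S.mul y x
  e := S.e
  ldiv a b := S.rdiv b a
  rdiv b a := S.ldiv a b
  one_mul := S.mul_one
  mul_one := S.one_mul
  mul_ldiv := S.rdiv_mul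
  ldiv_mul := S.mul_rdiv
  rdiv_mul := S.mul_ldiv
  mul_rdiv := S.ldiv_mul

variable {S}

lemma mem_op_lnuc {a : Q} (h : a ∈ S.rnuc) : a ∈ S.op.lnuc := fun x y => (h y x).symm

lemma mem_op_mnuc {a : Q} (h : a ∈ S.mnuc) : a ∈ S.op.mnuc := fun x y => (h y x).symm

lemma mem_center_of_mem_op_center {a : Q} (h : a ∈ S.op.center) : a ∈ S.center := by
  obtain ⟨⟨⟨hc, hl⟩, hm⟩, hr⟩ := h
  exact ⟨⟨⟨fun x => (hc x).symm, fun x y => (hr y x).symm⟩, fun x y => (hm y x).symm⟩,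
    fun x y => (hl y x).symm⟩

lemma aip_op_iff : S.op.AIP ↔ S.AIP := by
  change (∀ x y, S.linv (S.mul y x) = S.mul (S.linv y) (S.linv x)) ↔ _
  constructor
  · intro h x y
    have := h (S.rinv y) (S.rinv x)
    rw [S.linv_rinv, S.linv_rinv] at this
    rw [← this, S.rinv_linv]
  · intro h x y
    have := h (S.linv y) (S.linv x)
    rw [S.rinv_linv, S.rinv_linv] at this
    rw [← this, S.linv_rinv]

lemma sqEndo_op_iff : S.op.SqEndo ↔ S.SqEndo :=
  ⟨fun h x y => h y x, fun h x y => h y x⟩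

lemma mem_center_of_lnuc_mnuc {a : Q} (hc : a ∈ S.commutant) (hl : a ∈ S.lnuc)
    (hm : a ∈ S.mnuc) : a ∈ S.center := by
  refine ⟨⟨⟨hc, hl⟩, hm⟩, fun x y => ?_⟩
  rw [← hc, ← hl, hc x, hm, hc y]

lemma mem_center_of_lnuc_rnuc {a : Q} (hc : a ∈ S.commutant) (hl : a ∈ S.lnuc)
    (hr : a ∈ S.rnuc) : a ∈ S.center := by
  refine ⟨⟨⟨hc, hl⟩, fun x y => ?_⟩, hr⟩
  rw [← hc, hl, hc, hr, hc y]

lemma AIP.sq_mul_rinv_sq (h : S.AIP) (x : Q) :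
    S.mul (S.mul x x) (S.mul (S.rinv x) (S.rinv x)) = S.e := by
  rw [← h, S.mul_rinv]

lemma SqEndo.sq_mul_rinv_sq (h : S.SqEndo) (x : Q) :
    S.mul (S.mul x x) (S.mul (S.rinv x) (S.rinv x)) = S.e := by
  rw [← h, S.mul_rinv, S.one_mul]

lemma sq_mul_rinv_s17 {x : Q} (hl : S.mul x x ∈ S.lnuc)
    (h : S.mul (S.mul x x) (S.mul (S.rinv x) (S.rinv x)) = S.e) :
    S.mul (S.mul x x) (S.rinv x) = x :=
  S.mul_right_cancel (a := S.rinv x) (by rw [hl, h, S.mul_rinv])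

lemma mul_eq_sq_mul_sq_mul_rinv (hz : ∀ x, S.mul x x ∈ S.center)
    (h : ∀ x, S.mul (S.mul x x) (S.rinv x) = x) (x y : Q) :
    S.mul (S.mul (S.mul x x) (S.mul y y)) (S.mul (S.rinv x) (S.rinv y)) = S.mul x y := by
  obtain ⟨⟨⟨-, hxl⟩, -⟩, -⟩ := hz x
  obtain ⟨⟨⟨hyc, hyl⟩, hym⟩, -⟩ := hz y
  rw [hxl, ← hyl, hyc, hym, h y, ← hxl, h x]

lemma AIP.sqEndo (ha : S.AIP) (hz : ∀ x, S.mul x x ∈ S.center) : S.SqEndo := fun x y => by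
  have h : ∀ x, S.mul (S.mul x x) (S.rinv x) = x :=
    fun x => sq_mul_rinv_s17 (hz x).1.1.2 (ha.sq_mul_rinv_sq x)
  apply S.mul_right_cancel (a := S.rinv (S.mul x y))
  rw [h, ha, mul_eq_sq_mul_sq_mul_rinv hz h]

lemma SqEndo.aip (hs : S.SqEndo) (hz : ∀ x, S.mul x x ∈ S.center) : S.AIP := fun x y => by
  have h : ∀ x, S.mul (S.mul x x) (S.rinv x) = x :=
    fun x => sq_mul_rinv_s17 (hz x).1.1.2 (hs.sq_mul_rinv_sq x)
  apply S.mul_left_cancel (a := S.mul (S.mul x y) (S.mul x y))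
  rw [h, hs, mul_eq_sq_mul_sq_mul_rinv hz h]

lemma AIP.sq_mem_commutant_of_lnuc_mnuc (ha : S.AIP)
    (hsq : ∀ x, S.mul x x ∈ S.lnuc ∩ S.mnuc) (a : Q) : S.mul a a ∈ S.commutant := by
  intro x
  have hinv := ha.sq_mul_rinv_sq (S.linv a)
  have hx := S.mul_rinv (S.mul (S.mul (S.linv a) (S.linv a)) x)
  rw [ha, ha, S.rinv_linv, (hsq (S.linv a)).1] at hx
  rw [S.rinv_linv] at hinv
  have key := S.mul_left_cancel (hx.trans hinv.symm)
  apply S.mul_right_cancel (a := S.rinv x)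
  rw [(hsq a).2, key, (hsq a).1, S.mul_rinv, S.mul_one]

lemma AIP.sq_mem_commutant_of_lnuc_rnuc (ha : S.AIP)
    (hsq : ∀ x, S.mul x x ∈ S.lnuc ∩ S.rnuc) (a : Q) : S.mul a a ∈ S.commutant := by
  intro x
  have hinv := ha.sq_mul_rinv_sq a
  have hx := S.mul_rinv (S.mul x (S.mul a a))
  rw [ha, ha, ← (hsq (S.rinv a)).2] at hx
  have key := S.mul_right_cancel (hx.trans hinv.symm)
  apply S.mul_right_cancel (a := S.rinv x)
  rw [key, (hsq a).1, S.mul_rinv, S.mul_one]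

/-- If squaring is an endomorphism and `a²` is left nuclear, then `y(a²y) = a²y²`. -/
lemma SqEndo.mul_sq_mul (hs : S.SqEndo) {a : Q} (hl : S.mul a a ∈ S.lnuc) (y : Q) :
    S.mul y (S.mul (S.mul a a) y) = S.mul (S.mul a a) (S.mul y y) := by
  have h := hs (S.mul a a) y
  rw [hl, hl] at h
  exact S.mul_left_cancel h

lemma SqEndo.sq_mem_commutant_of_lnuc_mnuc (hs : S.SqEndo)
    (hsq : ∀ x, S.mul x x ∈ S.lnuc ∩ S.mnuc) (a : Q) : S.mul a a ∈ S.commutant := by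
  intro y
  apply S.mul_right_cancel (a := y)
  rw [(hsq a).1, (hsq a).2, hs.mul_sq_mul (hsq a).1]

lemma SqEndo.sq_mem_commutant_of_lnuc_rnuc (hs : S.SqEndo)
    (hsq : ∀ x, S.mul x x ∈ S.lnuc ∩ S.rnuc) (a : Q) : S.mul a a ∈ S.commutant := by
  intro y
  have sq_comm : S.mul (S.mul a a) (S.mul y y) = S.mul (S.mul y y) (S.mul a a) := by
    apply S.mul_right_cancel (a := S.mul y y)
    rw [(hsq a).1, (hsq y).1, hs.mul_sq_mul (hsq a).1]
  have conj : S.mul (S.mul y (S.mul a a)) y = S.mul (S.mul y y) (S.mul a a) := by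
    have h := hs y (S.mul a a)
    rw [← (hsq a).2, ← (hsq a).2] at h
    exact S.mul_right_cancel h
  symm
  apply S.mul_left_cancel (a := S.mul a a)
  apply S.mul_right_cancel (a := y)
  rw [(hsq a).1, conj, ← sq_comm, (hsq a).1, (hsq a).1]

lemma aip_iff_sqEndo_of_sq_mem_center (hza : S.AIP → ∀ x, S.mul x x ∈ S.center)
    (hzs : S.SqEndo → ∀ x, S.mul x x ∈ S.center) :
    (S.AIP ↔ S.SqEndo) ∧ (S.AIP → ∀ x, S.mul x x ∈ S.center) :=
  ⟨⟨fun h => h.sqEndo (hza h), fun h => h.aip (hzs h)⟩, hza⟩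

lemma aip_iff_sqEndo_of_lnuc_mnuc (hsq : ∀ x, S.mul x x ∈ S.lnuc ∩ S.mnuc) :
    (S.AIP ↔ S.SqEndo) ∧ (S.AIP → ∀ x, S.mul x x ∈ S.center) :=
  aip_iff_sqEndo_of_sq_mem_center
    (fun h x => mem_center_of_lnuc_mnuc (h.sq_mem_commutant_of_lnuc_mnuc hsq x)
      (hsq x).1 (hsq x).2)
    (fun h x => mem_center_of_lnuc_mnuc (h.sq_mem_commutant_of_lnuc_mnuc hsq x)
      (hsq x).1 (hsq x).2)

lemma aip_iff_sqEndo_of_lnuc_rnuc (hsq : ∀ x, S.mul x x ∈ S.lnuc ∩ S.rnuc) :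
    (S.AIP ↔ S.SqEndo) ∧ (S.AIP → ∀ x, S.mul x x ∈ S.center) :=
  aip_iff_sqEndo_of_sq_mem_center
    (fun h x => mem_center_of_lnuc_rnuc (h.sq_mem_commutant_of_lnuc_rnuc hsq x)
      (hsq x).1 (hsq x).2)
    (fun h x => mem_center_of_lnuc_rnuc (h.sq_mem_commutant_of_lnuc_rnuc hsq x)
      (hsq x).1 (hsq x).2)

lemma aip_iff_sqEndo_of_mnuc_rnuc (hsq : ∀ x, S.mul x x ∈ S.mnuc ∩ S.rnuc) :
    (S.AIP ↔ S.SqEndo) ∧ (S.AIP → ∀ x, S.mul x x ∈ S.center) := by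
  obtain ⟨hiff, hz⟩ := aip_iff_sqEndo_of_lnuc_mnuc (S := S.op)
    fun x => ⟨mem_op_lnuc (hsq x).2, mem_op_mnuc (hsq x).1⟩
  rw [aip_op_iff] at hiff hz
  rw [sqEndo_op_iff] at hiff
  exact ⟨hiff, fun h x => mem_center_of_mem_op_center (hz h x)⟩

end LoopStr

/-- In a loop with squares in two of the three nuclei, the
automorphic inverse property is equivalent to the squaring map being an
endomorphism; and when these equivalent conditions hold, squares are central. -/
theorem two_nuclei_aip_iff_sq_endo {Q : Type*} (S : LoopStr Q)
    (hsq : (∀ x : Q, S.mul x x ∈ S.lnuc ∩ S.mnuc) ∨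
           (∀ x : Q, S.mul x x ∈ S.lnuc ∩ S.rnuc) ∨
           (∀ x : Q, S.mul x x ∈ S.mnuc ∩ S.rnuc)) :
    ((∀ x y : Q, S.rinv (S.mul x y) = S.mul (S.rinv x) (S.rinv y)) ↔
      (∀ x y : Q, S.mul (S.mul x y) (S.mul x y) = S.mul (S.mul x x) (S.mul y y))) ∧
    ((∀ x y : Q, S.rinv (S.mul x y) = S.mul (S.rinv x) (S.rinv y)) →
      ∀ x : Q, S.mul x x ∈ S.center) := by
  rcases hsq with h | h | h
  · exact LoopStr.aip_iff_sqEndo_of_lnuc_mnuc h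
  · exact LoopStr.aip_iff_sqEndo_of_lnuc_rnuc h
  · exact LoopStr.aip_iff_sqEndo_of_mnuc_rnuc h
end
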